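/- arXiv:2603.07617 — 2 statements merged into one kernel-verified Lean document; each statement's English description precedes it below -/
import Mathlib

section
/- Let Ω′ ⊂ ℝ^N be a bounded open set, let a, b : Ω′ → ℝ with a(x) > 0 for all x ∈ Ω′, let h : [0,∞) → ℝ, and let u, w be twice differentiable on Ω′ and continuous on the closure of Ω′. If −Δu(x) + b(x)·h(|∇u(x)|) + a(x)·u(x) ≤ −Δw(x) + b(x)·h(|∇w(x)|) + a(x)·w(x) for all x ∈ Ω′, and u ≤ w on the boundary ∂Ω′, then u ≤ w throughout Ω′. -/
open Set

/-- The Laplacian of `f : ℝ^N → ℝ`, as the sum of the pure second derivatives in the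
coordinate directions. -/
noncomputable def laplacian {N : ℕ} (f : EuclideanSpace ℝ (Fin N) → ℝ)
    (x : EuclideanSpace ℝ (Fin N)) : ℝ :=
  ∑ i : Fin N, fderiv ℝ (fun y => fderiv ℝ f y (EuclideanSpace.single i 1)) x
    (EuclideanSpace.single i 1)

/-!
If `u - w` were positive somewhere, it would attain its maximum over the compact set `closure Ω` at
a point of `Ω`, the boundary being excluded by `u ≤ w` there. At that point the gradients agree, so
the Hamiltonians differ only through the values of `u` and `w`, and `Δ u ≤ Δ w`. Hence the
differential inequality bounds the zeroth-order term of `u` by that of `w`, which contradicts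
strict monotonicity in the value.
-/

open Filter Topology
open scoped Gradient Laplacian

section TwiceDifferentiable

variable {𝕜 E F : Type*} [NontriviallyNormedField 𝕜] [NormedAddCommGroup E] [NormedSpace 𝕜 E]
  [NormedAddCommGroup F] [NormedSpace 𝕜 F]

variable (𝕜) in
/-- `f` is twice differentiable at `x`. Differentiability of `f` near `x` is required separately,
because `fderiv` takes the value `0` where `f` is not differentiable. -/
def TwiceDifferentiableAt (f : E → F) (x : E) : Prop :=
  (∀ᶠ y in 𝓝 x, DifferentiableAt 𝕜 f y) ∧ DifferentiableAt 𝕜 (fderiv 𝕜 f) x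

variable {f g : E → F} {x : E}

theorem twiceDifferentiableAt_of_contDiffAt (hf : ContDiffAt 𝕜 2 f x) :
    TwiceDifferentiableAt 𝕜 f x := by
  refine ⟨?_, (hf.fderiv_right (m := 1) (by norm_num)).differentiableAt one_ne_zero⟩
  filter_upwards [hf.eventually (by simp)] with y hy using hy.differentiableAt two_ne_zero

theorem twiceDifferentiableAt_of_contDiffOn {s : Set E} (hf : ContDiffOn 𝕜 2 f s)
    (hs : IsOpen s) : ∀ x ∈ s, TwiceDifferentiableAt 𝕜 f x := fun _ hx =>
  twiceDifferentiableAt_of_contDiffAt (hf.contDiffAt (hs.mem_nhds hx))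

namespace TwiceDifferentiableAt

theorem differentiableAt (hf : TwiceDifferentiableAt 𝕜 f x) : DifferentiableAt 𝕜 f x :=
  hf.1.self_of_nhds

theorem fderiv_sub_eventuallyEq (hf : TwiceDifferentiableAt 𝕜 f x)
    (hg : TwiceDifferentiableAt 𝕜 g x) :
    fderiv 𝕜 (f - g) =ᶠ[𝓝 x] fderiv 𝕜 f - fderiv 𝕜 g := by
  filter_upwards [hf.1, hg.1] with y hfy hgy using fderiv_sub hfy hgy

theorem sub (hf : TwiceDifferentiableAt 𝕜 f x) (hg : TwiceDifferentiableAt 𝕜 g x) :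
    TwiceDifferentiableAt 𝕜 (f - g) x := by
  refine ⟨?_, (hf.2.sub hg.2).congr_of_eventuallyEq (hf.fderiv_sub_eventuallyEq hg)⟩
  filter_upwards [hf.1, hg.1] with y hfy hgy using hfy.sub hgy

theorem fderiv_fderiv_sub (hf : TwiceDifferentiableAt 𝕜 f x) (hg : TwiceDifferentiableAt 𝕜 g x) :
    fderiv 𝕜 (fderiv 𝕜 (f - g)) x = fderiv 𝕜 (fderiv 𝕜 f) x - fderiv 𝕜 (fderiv 𝕜 g) x := by
  rw [(hf.fderiv_sub_eventuallyEq hg).fderiv_eq, fderiv_sub hf.2 hg.2]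

theorem deriv_deriv_comp_add_smul (hf : TwiceDifferentiableAt 𝕜 f x) (v : E) :
    deriv (deriv fun t : 𝕜 => f (x + t • v)) 0 = fderiv 𝕜 (fderiv 𝕜 f) x v v := by
  have hline : Tendsto (fun t : 𝕜 => x + t • v) (𝓝 0) (𝓝 x) :=
    Continuous.tendsto' (by fun_prop) 0 x (by simp)
  have hderiv : deriv (fun t : 𝕜 => f (x + t • v)) =ᶠ[𝓝 0] fun t => fderiv 𝕜 f (x + t • v) v := by
    filter_upwards [hline.eventually hf.1] with t ht using ht.deriv_comp_add_smul
  have hf' : DifferentiableAt 𝕜 (fun y => fderiv 𝕜 f y v) (x + (0 : 𝕜) • v) := by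
    simpa only [zero_smul, add_zero] using hf.2.clm_apply (differentiableAt_const v)
  rw [hderiv.deriv_eq, hf'.deriv_comp_add_smul, zero_smul, add_zero,
    fderiv_clm_apply hf.2 (differentiableAt_const v)]
  simp

end TwiceDifferentiableAt

end TwiceDifferentiable

section LocalMax

theorem deriv_deriv_nonpos_of_isLocalMax {g : ℝ → ℝ} {t : ℝ} (hmax : IsLocalMax g t)
    (hg : ContinuousAt g t) : deriv (deriv g) t ≤ 0 := by
  by_contra! hpos
  -- By the second derivative test `t` is also a local minimum, so `g` is constant near `t`.
  have hmin : IsLocalMin g t := isLocalMin_of_deriv_deriv_pos hpos hmax.deriv_eq_zero hg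
  have hconst : g =ᶠ[𝓝 t] fun _ => g t := by
    filter_upwards [hmax, hmin] with s hle hge using le_antisymm hle hge
  have hzero : deriv (deriv g) t = 0 := by
    rw [hconst.deriv.deriv_eq, deriv_const', deriv_const]
  exact hpos.ne' hzero

theorem fderiv_fderiv_nonpos_of_isLocalMax {E : Type*} [NormedAddCommGroup E] [NormedSpace ℝ E]
    {f : E → ℝ} {x : E} (hmax : IsLocalMax f x) (hf : TwiceDifferentiableAt ℝ f x) (v : E) :
    fderiv ℝ (fderiv ℝ f) x v v ≤ 0 := by
  have hline : ContinuousAt (fun t : ℝ => x + t • v) 0 := by fun_prop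
  have hx : x = x + (0 : ℝ) • v := by simp
  rw [← hf.deriv_deriv_comp_add_smul v]
  refine deriv_deriv_nonpos_of_isLocalMax ?_ ?_
  · exact IsLocalMax.comp_continuous (g := fun t : ℝ => x + t • v) (hx ▸ hmax) hline
  · exact ContinuousAt.comp_of_eq hf.differentiableAt.continuousAt hline hx.symm

theorem gradient_eq_of_isLocalMax_sub {E : Type*} [NormedAddCommGroup E] [InnerProductSpace ℝ E]
    [CompleteSpace E] {u w : E → ℝ} {x : E} (hmax : IsLocalMax (u - w) x)
    (hu : DifferentiableAt ℝ u x) (hw : DifferentiableAt ℝ w x) : ∇ u x = ∇ w x := by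
  have hzero := hmax.fderiv_eq_zero
  rw [fderiv_sub hu hw, sub_eq_zero] at hzero
  rw [gradient, gradient, hzero]

end LocalMax

section Laplacian

variable {E : Type*} [NormedAddCommGroup E] [InnerProductSpace ℝ E] [FiniteDimensional ℝ E]

theorem laplacian_eq_sum_fderiv_fderiv {ι F : Type*} [Fintype ι] [NormedAddCommGroup F]
    [NormedSpace ℝ F] (e : OrthonormalBasis ι ℝ E) (f : E → F) (x : E) :
    Δ f x = ∑ i, fderiv ℝ (fderiv ℝ f) x (e i) (e i) := by
  simp [InnerProductSpace.laplacian_eq_iteratedFDeriv_orthonormalBasis f e,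
    iteratedFDeriv_two_apply]

theorem coordinate_laplacian_eq_laplacian {N : ℕ} {f : EuclideanSpace ℝ (Fin N) → ℝ}
    {x : EuclideanSpace ℝ (Fin N)} (hf : DifferentiableAt ℝ (fderiv ℝ f) x) :
    laplacian f x = Δ f x := by
  rw [laplacian_eq_sum_fderiv_fderiv (EuclideanSpace.basisFun (Fin N) ℝ), laplacian]
  refine Finset.sum_congr rfl fun i _ => ?_
  rw [fderiv_clm_apply hf (differentiableAt_const _)]
  simp

theorem laplacian_le_of_isLocalMax_sub {u w : E → ℝ} {x : E} (hmax : IsLocalMax (u - w) x)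
    (hu : TwiceDifferentiableAt ℝ u x) (hw : TwiceDifferentiableAt ℝ w x) : Δ u x ≤ Δ w x := by
  simp only [laplacian_eq_sum_fderiv_fderiv (stdOrthonormalBasis ℝ E)]
  refine Finset.sum_le_sum fun i _ => sub_nonpos.mp ?_
  simpa only [hu.fderiv_fderiv_sub hw, sub_apply] using
    fderiv_fderiv_nonpos_of_isLocalMax hmax (hu.sub hw) (stdOrthonormalBasis ℝ E i)

theorem comparison_principle_general {Ω : Set E} (hΩbdd : Bornology.IsBounded Ω)
    (hΩopen : IsOpen Ω) {H : E → ℝ → E → ℝ} (hH : ∀ x ∈ Ω, ∀ p, StrictMono fun r => H x r p)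
    {u w : E → ℝ} (hu : ∀ x ∈ Ω, TwiceDifferentiableAt ℝ u x)
    (hw : ∀ x ∈ Ω, TwiceDifferentiableAt ℝ w x)
    (huc : ContinuousOn u (closure Ω)) (hwc : ContinuousOn w (closure Ω))
    (hcomp : ∀ x ∈ Ω, -Δ u x + H x (u x) (∇ u x) ≤ -Δ w x + H x (w x) (∇ w x))
    (hbdy : ∀ x ∈ frontier Ω, u x ≤ w x) :
    ∀ x ∈ Ω, u x ≤ w x := by
  intro x hx
  by_contra! hlt
  have hbdy_lt : ∀ z ∈ closure Ω \ Ω, (u - w) z < (u - w) x := fun z hz =>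
    (sub_nonpos.mpr (hbdy z (hΩopen.frontier_eq ▸ hz))).trans_lt (sub_pos.mpr hlt)
  obtain ⟨y, hy, hymax⟩ := hΩbdd.isCompact_closure.exists_isMaxOn_mem_subset
    (huc.sub hwc) (subset_closure hx) hbdy_lt
  have hpos : w y < u y := sub_pos.mp ((sub_pos.mpr hlt).trans_le (hymax (subset_closure hx)))
  have hmax : IsLocalMax (u - w) y :=
    hymax.isLocalMax (mem_of_superset (hΩopen.mem_nhds hy) subset_closure)
  have hgrad : ∇ u y = ∇ w y :=
    gradient_eq_of_isLocalMax_sub hmax (hu y hy).differentiableAt (hw y hy).differentiableAt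
  have hlap : Δ u y ≤ Δ w y := laplacian_le_of_isLocalMax_sub hmax (hu y hy) (hw y hy)
  have hstrict : H y (w y) (∇ w y) < H y (u y) (∇ u y) := hgrad ▸ hH y hy (∇ u y) hpos
  linarith [hcomp y hy]

end Laplacian

/-- comparison principle. Let `Ω′ ⊂ ℝ^N` be bounded open, `a > 0` on `Ω′`,
`h : [0,∞) → ℝ`, and `u, w` twice differentiable on `Ω′` and continuous on its closure.
If `−Δu + b·h(|∇u|) + a·u ≤ −Δw + b·h(|∇w|) + a·w` in `Ω′` and `u ≤ w` on `∂Ω′`,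
then `u ≤ w` in `Ω′`. -/
theorem comparison_principle {N : ℕ} (hN : 1 ≤ N)
    (Ω' : Set (EuclideanSpace ℝ (Fin N))) (hΩ'bdd : Bornology.IsBounded Ω')
    (hΩ'open : IsOpen Ω')
    (a b : EuclideanSpace ℝ (Fin N) → ℝ) (ha : ∀ x ∈ Ω', 0 < a x)
    (h : ℝ → ℝ) (u w : EuclideanSpace ℝ (Fin N) → ℝ)
    (hu : ContDiffOn ℝ 2 u Ω') (hw : ContDiffOn ℝ 2 w Ω')
    (huc : ContinuousOn u (closure Ω')) (hwc : ContinuousOn w (closure Ω'))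
    (hcomp : ∀ x ∈ Ω',
      -laplacian u x + b x * h ‖gradient u x‖ + a x * u x ≤
      -laplacian w x + b x * h ‖gradient w x‖ + a x * w x)
    (hbdy : ∀ x ∈ frontier Ω', u x ≤ w x) :
    ∀ x ∈ Ω', u x ≤ w x := by
  have hu₂ := twiceDifferentiableAt_of_contDiffOn hu hΩ'open
  have hw₂ := twiceDifferentiableAt_of_contDiffOn hw hΩ'open
  refine comparison_principle_general (H := fun x r p => b x * h ‖p‖ + a x * r) hΩ'bdd hΩ'open
    (fun x hx _ => (strictMono_mul_left_of_pos (ha x hx)).const_add _) hu₂ hw₂ huc hwc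
    (fun x hx => ?_) hbdy
  simpa only [coordinate_laplacian_eq_laplacian (hu₂ x hx).2,
    coordinate_laplacian_eq_laplacian (hw₂ x hx).2, add_assoc] using hcomp x hx
end

section
/- Let N ≥ 1, let Ω ⊂ ℝ^N be open, δ₀ > 0, and let v : Ω → ℝ be positive and twice continuously differentiable on S = {x ∈ Ω : 0 < v(x) < δ₀}, with |∇v(x)| = 1 and |Δv(x)| ≤ M on S for some M ≥ 0. Let q > 1, β ≥ 0 with q < β + 2, and set γ = (β − q + 2)/(q − 1). Assume h : [0,∞) → [0,∞) satisfies h(s) ≥ l₁·s^q for all s ≥ 0 with l₁ > 0; that b(x) ≥ b₁·v(x)^β on S with b₁ > 0; that a(x) ≥ 0 on S; and that f(x) ≤ F₀ on S for some constant F₀. Then for every constant C > (γ(γ+1)/(b₁·l₁·γ^q))^{1/(q−1)} there exists δ ∈ (0, δ₀] such that the function W(x) = C·v(x)^{−γ} satisfies −ΔW(x) + b(x)·h(|∇W(x)|) + a(x)·W(x) − f(x) ≥ 0 for every x ∈ Ω with 0 < v(x) < δ. -/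
open Set

/-!
Let `φ t = C t ^ (-γ)`. Since `|∇v| = 1`, the function `W = φ ∘ v` has
`ΔW = φ''(v) + φ'(v) Δv ≤ Cγ(γ + 1) v ^ (-γ - 2) + CγM v ^ (-γ - 1)` and `|∇W| = Cγ v ^ (-γ - 1)`.
The exponent `γ` is the one for which `v ^ β |∇W| ^ q` also scales like `v ^ (-γ - 2)`, and the
condition on `C` says that its coefficient exceeds the leading one of `ΔW`. After multiplication
by `v ^ (γ + 2)` the remaining terms tend to `0` as `v → 0⁺`.
-/

open Filter Topology

theorem norm_gradient_sq_eq_sum {N : ℕ} (v : EuclideanSpace ℝ (Fin N) → ℝ)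
    (x : EuclideanSpace ℝ (Fin N)) :
    ‖gradient v x‖ ^ 2 = ∑ i : Fin N, fderiv ℝ v x (EuclideanSpace.single i 1) ^ 2 := by
  simp only [EuclideanSpace.norm_sq_eq, ← inner_gradient_left, EuclideanSpace.inner_single_right,
    conj_trivial, one_mul, Real.norm_eq_abs, sq_abs]

section ChainRule

variable {𝕜 : Type*}

theorem norm_gradient_comp [RCLike 𝕜] {E : Type*} [NormedAddCommGroup E] [InnerProductSpace 𝕜 E]
    [CompleteSpace E] {v : E → 𝕜} {x : E} {φ : 𝕜 → 𝕜} {φ' : 𝕜}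
    (hφ : HasDerivAt φ φ' (v x)) (hv : DifferentiableAt 𝕜 v x) :
    ‖gradient (fun y => φ (v y)) x‖ = ‖φ'‖ * ‖gradient v x‖ := by
  have hcomp : fderiv 𝕜 (fun y => φ (v y)) x = φ' • fderiv 𝕜 v x :=
    (hφ.comp_hasFDerivAt x hv.hasFDerivAt).fderiv
  simp only [gradient, LinearIsometryEquiv.norm_map, hcomp, norm_smul]

theorem fderiv_fderiv_comp_apply [NontriviallyNormedField 𝕜] {E : Type*} [NormedAddCommGroup E]
    [NormedSpace 𝕜 E] {v : E → 𝕜} {x : E} {φ φ' : 𝕜 → 𝕜} {φ'' : 𝕜}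
    (hφ : ∀ᶠ t in 𝓝 (v x), HasDerivAt φ (φ' t) t) (hφ' : HasDerivAt φ' φ'' (v x))
    (hv : ContDiffAt 𝕜 2 v x) (d e : E) :
    fderiv 𝕜 (fun y => fderiv 𝕜 (fun z => φ (v z)) y e) x d =
      φ'' * (fderiv 𝕜 v x d * fderiv 𝕜 v x e)
        + φ' (v x) * fderiv 𝕜 (fun y => fderiv 𝕜 v y e) x d := by
  have hdiff : ∀ᶠ y in 𝓝 x, DifferentiableAt 𝕜 v y :=
    (hv.eventually (by simp)).mono fun y hy => hy.differentiableAt (by simp)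
  have hvx : HasFDerivAt v (fderiv 𝕜 v x) x := hdiff.self_of_nhds.hasFDerivAt
  have hfirst : (fun y => fderiv 𝕜 (fun z => φ (v z)) y e)
      =ᶠ[𝓝 x] fun y => φ' (v y) * fderiv 𝕜 v y e := by
    filter_upwards [hdiff, hvx.continuousAt.eventually hφ] with y hy hφy
    have hcomp : fderiv 𝕜 (fun z => φ (v z)) y = φ' (v y) • fderiv 𝕜 v y :=
      (hφy.comp_hasFDerivAt y hy.hasFDerivAt).fderiv
    rw [hcomp, smul_apply, smul_eq_mul]
  have hpartial : DifferentiableAt 𝕜 (fun y => fderiv 𝕜 v y e) x :=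
    ((hv.fderiv_right (m := 1) (by norm_num)).differentiableAt (by simp)).clm_apply
      (differentiableAt_const e)
  have hproduct : fderiv 𝕜 (fun y => φ' (v y) * fderiv 𝕜 v y e) x = _ :=
    ((hφ'.comp_hasFDerivAt x hvx).mul hpartial.hasFDerivAt).fderiv
  rw [hfirst.fderiv_eq, hproduct]
  simp only [Function.comp_apply, add_apply, smul_apply, smul_eq_mul]
  ring

theorem laplacian_comp {N : ℕ} {v : EuclideanSpace ℝ (Fin N) → ℝ}
    {x : EuclideanSpace ℝ (Fin N)} {φ φ' : ℝ → ℝ} {φ'' : ℝ}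
    (hφ : ∀ᶠ t in 𝓝 (v x), HasDerivAt φ (φ' t) t) (hφ' : HasDerivAt φ' φ'' (v x))
    (hv : ContDiffAt ℝ 2 v x) :
    laplacian (fun y => φ (v y)) x = φ'' * ‖gradient v x‖ ^ 2 + φ' (v x) * laplacian v x := by
  simp only [laplacian, norm_gradient_sq_eq_sum, fderiv_fderiv_comp_apply hφ hφ' hv,
    Finset.sum_add_distrib, Finset.mul_sum, ← sq]

end ChainRule

section PowerProfile

theorem hasDerivAt_const_mul_rpow (C p : ℝ) {t : ℝ} (ht : t ≠ 0) :
    HasDerivAt (fun s : ℝ => C * s ^ p) (C * p * t ^ (p - 1)) t := by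
  simpa only [mul_assoc] using (Real.hasDerivAt_rpow_const (Or.inl ht)).const_mul C

theorem norm_gradient_const_mul_rpow {E : Type*} [NormedAddCommGroup E] [InnerProductSpace ℝ E]
    [CompleteSpace E] {v : E → ℝ} {x : E} (hv : DifferentiableAt ℝ v x) (hx : v x ≠ 0)
    (C p : ℝ) :
    ‖gradient (fun y => C * v y ^ p) x‖ = |C * p * v x ^ (p - 1)| * ‖gradient v x‖ :=
  norm_gradient_comp (hasDerivAt_const_mul_rpow C p hx) hv

theorem laplacian_const_mul_rpow {N : ℕ} {v : EuclideanSpace ℝ (Fin N) → ℝ}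
    {x : EuclideanSpace ℝ (Fin N)} (hv : ContDiffAt ℝ 2 v x) (hx : v x ≠ 0) (C p : ℝ) :
    laplacian (fun y => C * v y ^ p) x =
      C * p * (p - 1) * v x ^ (p - 2) * ‖gradient v x‖ ^ 2
        + C * p * v x ^ (p - 1) * laplacian v x := by
  have hcomp := laplacian_comp
    ((eventually_ne_nhds hx).mono fun _ => hasDerivAt_const_mul_rpow C p)
    (hasDerivAt_const_mul_rpow (C * p) (p - 1) hx) hv
  rwa [sub_sub, one_add_one_eq_two] at hcomp

theorem norm_gradient_const_mul_rpow_neg {E : Type*} [NormedAddCommGroup E]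
    [InnerProductSpace ℝ E] [CompleteSpace E] {v : E → ℝ} {x : E} {C γ : ℝ}
    (hv : DifferentiableAt ℝ v x) (hx : 0 < v x) (hgrad : ‖gradient v x‖ = 1) (hCγ : 0 ≤ C * γ) :
    ‖gradient (fun y => C * v y ^ (-γ)) x‖ = C * γ * v x ^ (-γ - 1) := by
  rw [norm_gradient_const_mul_rpow hv hx.ne', hgrad, mul_one, mul_neg, neg_mul, abs_neg,
    abs_of_nonneg (by positivity)]

theorem laplacian_const_mul_rpow_neg_le {N : ℕ} {v : EuclideanSpace ℝ (Fin N) → ℝ}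
    {x : EuclideanSpace ℝ (Fin N)} {C γ M : ℝ} (hv : ContDiffAt ℝ 2 v x) (hx : 0 < v x)
    (hgrad : ‖gradient v x‖ = 1) (hlap : -M ≤ laplacian v x) (hCγ : 0 ≤ C * γ) :
    laplacian (fun y => C * v y ^ (-γ)) x ≤
      C * γ * (γ + 1) * v x ^ (-γ - 2) + C * γ * M * v x ^ (-γ - 1) := by
  have hfirst : C * γ * v x ^ (-γ - 1) * -M ≤ C * γ * v x ^ (-γ - 1) * laplacian v x :=
    mul_le_mul_of_nonneg_left hlap (by positivity)
  rw [laplacian_const_mul_rpow hv hx.ne', hgrad]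
  linear_combination hfirst

end PowerProfile

theorem mul_lt_mul_rpow_of_div_rpow_lt {A c q C : ℝ} (hA : 0 ≤ A) (hc : 0 < c) (hq : 1 < q)
    (hC : (A / c) ^ (1 / (q - 1)) < C) : C * A < c * C ^ q := by
  have hC0 : 0 < C := hC.trans_le' (by positivity)
  have hlt : A < C ^ (q - 1) * c := by
    rwa [one_div, Real.rpow_inv_lt_iff_of_pos (by positivity) hC0.le (sub_pos.2 hq),
      div_lt_iff₀ hc] at hC
  calc C * A < C * (C ^ (q - 1) * c) := mul_lt_mul_of_pos_left hlt hC0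
    _ = c * C ^ q := by rw [Real.rpow_sub_one hC0.ne']; field_simp

theorem eventually_lower_order_lt {A p : ℝ} (hA : 0 < A) (hp : 0 < p) (B F : ℝ) :
    ∀ᶠ t in 𝓝 (0 : ℝ), B * t + F * t ^ p < A := by
  have hcont : ContinuousAt (fun t : ℝ => B * t + F * t ^ p) 0 := by
    have := Real.continuousAt_rpow_const 0 p (Or.inr hp.le)
    fun_prop
  exact hcont.eventually_lt_const (by simpa [Real.zero_rpow hp.ne'] using hA)

/-- The balance condition makes `t ^ β * (t ^ (-γ - 1)) ^ q` and the second derivative of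
`t ^ (-γ)` scale alike, so that only the constants `K * (γ + 1)` and `c * K ^ q` compete. -/
theorem eventually_rpow_barrier_le {K c q β γ : ℝ} (hK : 0 ≤ K) (hγ : 0 < γ + 2)
    (hbalance : γ * (q - 1) = β - q + 2) (hlt : K * (γ + 1) < c * K ^ q) (M F : ℝ) :
    ∀ᶠ t in 𝓝[>] (0 : ℝ),
      K * (γ + 1) * t ^ (-γ - 2) + K * M * t ^ (-γ - 1) + F ≤
        c * t ^ β * (K * t ^ (-γ - 1)) ^ q := by
  filter_upwards [(eventually_lower_order_lt (sub_pos.2 hlt) hγ (K * M) F).filter_mono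
    nhdsWithin_le_nhds, self_mem_nhdsWithin] with t hlower (ht : 0 < t)
  have hfirst : t ^ (-γ - 1) = t ^ (-γ - 2) * t := by
    rw [← Real.rpow_add_one ht.ne']; ring_nf
  have hone : t ^ (-γ - 2) * t ^ (γ + 2) = 1 := by
    rw [← Real.rpow_add ht, ← neg_add', neg_add_cancel, Real.rpow_zero]
  have hscale : t ^ β * (t ^ (-γ - 1)) ^ q = t ^ (-γ - 2) := by
    rw [← Real.rpow_mul ht.le, ← Real.rpow_add ht]
    congr 1
    linarith
  calc K * (γ + 1) * t ^ (-γ - 2) + K * M * t ^ (-γ - 1) + F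
      = t ^ (-γ - 2) * (K * (γ + 1) + (K * M * t + F * t ^ (γ + 2))) := by
        rw [hfirst]; linear_combination -F * hone
    _ ≤ t ^ (-γ - 2) * (c * K ^ q) := by gcongr; linarith
    _ = c * t ^ β * (K * t ^ (-γ - 1)) ^ q := by
        rw [Real.mul_rpow hK (by positivity), ← hscale]; ring

theorem residual_const_mul_rpow_neg_nonneg {N : ℕ} {v : EuclideanSpace ℝ (Fin N) → ℝ}
    {x : EuclideanSpace ℝ (Fin N)} {h : ℝ → ℝ} {C γ M q β l₁ b₁ a b f F : ℝ}
    (hv : ContDiffAt ℝ 2 v x) (hx : 0 < v x) (hgrad : ‖gradient v x‖ = 1)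
    (hlap : -M ≤ laplacian v x) (hC : 0 ≤ C) (hγ : 0 ≤ γ) (hb₁ : 0 ≤ b₁) (hl₁ : 0 ≤ l₁)
    (hh : ∀ s : ℝ, 0 ≤ s → l₁ * s ^ q ≤ h s) (hb : b₁ * v x ^ β ≤ b) (ha : 0 ≤ a) (hf : f ≤ F)
    (hbarrier : C * γ * (γ + 1) * v x ^ (-γ - 2) + C * γ * M * v x ^ (-γ - 1) + F ≤
      b₁ * l₁ * v x ^ β * (C * γ * v x ^ (-γ - 1)) ^ q) :
    0 ≤ -laplacian (fun y => C * v y ^ (-γ)) x + b * h ‖gradient (fun y => C * v y ^ (-γ)) x‖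
      + a * (C * v x ^ (-γ)) - f := by
  have hCγ : 0 ≤ C * γ := mul_nonneg hC hγ
  have hlapW := laplacian_const_mul_rpow_neg_le hv hx hgrad hlap hCγ
  have hgradient_term : b₁ * v x ^ β * (l₁ * (C * γ * v x ^ (-γ - 1)) ^ q) ≤
      b * h ‖gradient (fun y => C * v y ^ (-γ)) x‖ := by
    rw [norm_gradient_const_mul_rpow_neg (hv.differentiableAt (by simp)) hx hgrad hCγ]
    exact mul_le_mul hb (hh _ (by positivity)) (by positivity) (hb.trans' (by positivity))
  have hzeroth_order_term : 0 ≤ a * (C * v x ^ (-γ)) := by positivity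
  linarith

theorem collar_mem_nhds {E : Type*} [NormedAddCommGroup E] [InnerProductSpace ℝ E]
    [CompleteSpace E] {Ω : Set E} (hΩ : IsOpen Ω) {v : E → ℝ} {δ₁ δ₂ : ℝ} {x : E}
    (hx : x ∈ {x ∈ Ω | δ₁ < v x ∧ v x < δ₂}) (hgrad : gradient v x ≠ 0) :
    {x ∈ Ω | δ₁ < v x ∧ v x < δ₂} ∈ 𝓝 x := by
  -- Where `v` is not differentiable, `gradient v x` has the junk value `0`.
  have hdiff : DifferentiableAt ℝ v x :=
    not_imp_comm.1 gradient_eq_zero_of_not_differentiableAt hgrad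
  exact inter_mem (hΩ.mem_nhds hx.1) (hdiff.continuousAt (Ioo_mem_nhds hx.2.1 hx.2.2))

theorem supersolution_barrier_gradient_dominant_general {N : ℕ}
    (Ω : Set (EuclideanSpace ℝ (Fin N))) (δ₀ : ℝ) (hδ₀ : 0 < δ₀)
    (v : EuclideanSpace ℝ (Fin N) → ℝ) (M : ℝ)
    (hv : ∀ x ∈ {x ∈ Ω | 0 < v x ∧ v x < δ₀}, ContDiffAt ℝ 2 v x)
    (hgrad : ∀ x ∈ {x ∈ Ω | 0 < v x ∧ v x < δ₀}, ‖gradient v x‖ = 1)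
    (hlap : ∀ x ∈ {x ∈ Ω | 0 < v x ∧ v x < δ₀}, -M ≤ laplacian v x)
    (q β : ℝ) (hq : 1 < q) (hqβ : q < β + 2)
    (γ : ℝ) (hγ : γ = (β - q + 2) / (q - 1))
    (h : ℝ → ℝ) (l₁ : ℝ) (hl₁ : 0 < l₁) (hh : ∀ s : ℝ, 0 ≤ s → l₁ * s ^ q ≤ h s)
    (a b f : EuclideanSpace ℝ (Fin N) → ℝ) (b₁ : ℝ) (hb₁ : 0 < b₁)
    (hbv : ∀ x ∈ {x ∈ Ω | 0 < v x ∧ v x < δ₀}, b₁ * v x ^ β ≤ b x)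
    (ha : ∀ x ∈ {x ∈ Ω | 0 < v x ∧ v x < δ₀}, 0 ≤ a x)
    (F₀ : ℝ) (hf : ∀ x ∈ {x ∈ Ω | 0 < v x ∧ v x < δ₀}, f x ≤ F₀)
    (C : ℝ) (hC : (γ * (γ + 1) / (b₁ * l₁ * γ ^ q)) ^ (1 / (q - 1)) < C) :
    ∃ δ : ℝ, 0 < δ ∧ δ ≤ δ₀ ∧ ∀ x ∈ Ω, 0 < v x → v x < δ →
      0 ≤ -laplacian (fun y => C * v y ^ (-γ)) x
          + b x * h ‖gradient (fun y => C * v y ^ (-γ)) x‖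
          + a x * (C * v x ^ (-γ)) - f x := by
  have hq1 : 0 < q - 1 := sub_pos.2 hq
  have hγ0 : 0 < γ := hγ ▸ div_pos (by linarith) hq1
  have hC0 : 0 < C := hC.trans_le' (by positivity)
  have hcritical : C * γ * (γ + 1) < b₁ * l₁ * (C * γ) ^ q := by
    rw [Real.mul_rpow hC0.le hγ0.le]
    linear_combination mul_lt_mul_rpow_of_div_rpow_lt (by positivity) (by positivity) hq hC
  obtain ⟨δ, ⟨hδ, hδδ₀⟩, hbarrier⟩ := (mem_nhdsGT_iff_exists_mem_Ioc_Ioo_subset hδ₀).1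
    (eventually_rpow_barrier_le (mul_pos hC0 hγ0).le (by linarith) (β := β)
      (by rw [hγ, div_mul_cancel₀ _ hq1.ne']) hcritical M F₀)
  refine ⟨δ, hδ, hδδ₀, fun x hxΩ hx0 hxδ => ?_⟩
  have hxS : x ∈ {x ∈ Ω | 0 < v x ∧ v x < δ₀} := ⟨hxΩ, hx0, hxδ.trans_le hδδ₀⟩
  exact residual_const_mul_rpow_neg_nonneg (hv x hxS) hx0 (hgrad x hxS) (hlap x hxS) hC0.le hγ0.le
    hb₁.le hl₁.le hh (hbv x hxS) (ha x hxS) (hf x hxS) (hbarrier ⟨hx0, hxδ⟩)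

/-- supersolution barrier in the gradient-dominant regime `q < β + 2`.
With `γ = (β − q + 2)/(q − 1)`, `h(s) ≥ l₁·s^q`, `b ≥ b₁·v^β`, `a ≥ 0`, `f ≤ F₀` on the
collar `S = {x ∈ Ω : 0 < v(x) < δ₀}` where `|∇v| = 1` and `|Δv| ≤ M`, for every
`C > (γ(γ+1)/(b₁·l₁·γ^q))^{1/(q−1)}` the function `W = C·v^{−γ}` satisfies
`−ΔW + b·h(|∇W|) + a·W − f ≥ 0` on `{0 < v < δ}` for some `δ ∈ (0, δ₀]`. -/
theorem supersolution_barrier_gradient_dominant {N : ℕ} (hN : 1 ≤ N)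
    (Ω : Set (EuclideanSpace ℝ (Fin N))) (hΩ : IsOpen Ω)
    (δ₀ : ℝ) (hδ₀ : 0 < δ₀)
    (v : EuclideanSpace ℝ (Fin N) → ℝ) (M : ℝ) (hM : 0 ≤ M)
    (hv : ContDiffOn ℝ 2 v {x ∈ Ω | 0 < v x ∧ v x < δ₀})
    (hgrad : ∀ x ∈ {x ∈ Ω | 0 < v x ∧ v x < δ₀}, ‖gradient v x‖ = 1)
    (hlap : ∀ x ∈ {x ∈ Ω | 0 < v x ∧ v x < δ₀}, |laplacian v x| ≤ M)
    (q β : ℝ) (hq : 1 < q) (hβ : 0 ≤ β) (hqβ : q < β + 2)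
    (γ : ℝ) (hγ : γ = (β - q + 2) / (q - 1))
    (h : ℝ → ℝ) (l₁ : ℝ) (hl₁ : 0 < l₁)
    (hhnn : ∀ s : ℝ, 0 ≤ s → 0 ≤ h s)
    (hh : ∀ s : ℝ, 0 ≤ s → l₁ * s ^ q ≤ h s)
    (a b f : EuclideanSpace ℝ (Fin N) → ℝ) (b₁ : ℝ) (hb₁ : 0 < b₁)
    (hbv : ∀ x ∈ {x ∈ Ω | 0 < v x ∧ v x < δ₀}, b₁ * v x ^ β ≤ b x)
    (ha : ∀ x ∈ {x ∈ Ω | 0 < v x ∧ v x < δ₀}, 0 ≤ a x)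
    (F₀ : ℝ) (hf : ∀ x ∈ {x ∈ Ω | 0 < v x ∧ v x < δ₀}, f x ≤ F₀)
    (C : ℝ) (hC : (γ * (γ + 1) / (b₁ * l₁ * γ ^ q)) ^ (1 / (q - 1)) < C) :
    ∃ δ : ℝ, 0 < δ ∧ δ ≤ δ₀ ∧ ∀ x ∈ Ω, 0 < v x → v x < δ →
      0 ≤ -laplacian (fun y => C * v y ^ (-γ)) x
          + b x * h ‖gradient (fun y => C * v y ^ (-γ)) x‖
          + a x * (C * v x ^ (-γ)) - f x :=
  supersolution_barrier_gradient_dominant_general Ω δ₀ hδ₀ v M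
    (fun x hx => hv.contDiffAt
      (collar_mem_nhds hΩ hx (norm_ne_zero_iff.1 (by simp [hgrad x hx]))))
    hgrad (fun x hx => neg_le_of_abs_le (hlap x hx)) q β hq hqβ γ hγ h l₁ hl₁ hh a b f b₁ hb₁ hbv ha
    F₀ hf C hC
end
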